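/- arXiv:0903.0449 — 4 statements merged into one kernel-verified Lean document; each statement's English description precedes it below -/
import Mathlib

section
/- Let d ≥ 1, k > 0, ε > 0, let ν : ℝ × ℝ^d → ℝ be continuous, and let a, b : ℝ × ℝ^d → ℂ (written a(z,x), b(z,x)) be smooth, with a(z,·) and b(z,·) Schwartz functions of x for each z, all Schwartz seminorms of a(z,·), b(z,·), ∂_z a(z,·), ∂_z b(z,·) being locally bounded in z. Suppose a and b satisfy the coupled paraxial mode equations ∂_z a = 𝒫a + e^{−2ikz/ε⁴} 𝒫b and ∂_z b = −e^{2ikz/ε⁴} 𝒫a − 𝒫b, where 𝒫u(z,x) = (ik/(2ε)) ν(z/ε², x) u(z,x) + (i/(2k)) Δ_x u(z,x). Then the function z ↦ ∫_{ℝ^d} (|a(z,x)|² − |b(z,x)|²) dx is constant. -/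
open MeasureTheory SchwartzMap

/-- Transverse Laplacian `Δ_x u = ∑ i ∂²u/∂x_i²` of a function on `ℝ^d`. -/
noncomputable def lapl {d : ℕ} (u : EuclideanSpace ℝ (Fin d) → ℂ)
    (x : EuclideanSpace ℝ (Fin d)) : ℂ :=
  ∑ i : Fin d,
    fderiv ℝ (fun y => fderiv ℝ u y (EuclideanSpace.single i (1 : ℝ))) x
      (EuclideanSpace.single i (1 : ℝ))

/-- The paraxial operator `𝒫u(z,x) = (ik/(2ε)) ν(z/ε²,x) u(z,x) + (i/(2k)) Δ_x u(z,x)`. -/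
noncomputable def paraxOp {d : ℕ} (k ε : ℝ) (ν : ℝ → EuclideanSpace ℝ (Fin d) → ℝ)
    (u : ℝ → EuclideanSpace ℝ (Fin d) → ℂ) (z : ℝ) (x : EuclideanSpace ℝ (Fin d)) : ℂ :=
  (Complex.I * k / (2 * ε)) * (ν (z / ε ^ 2) x : ℝ) * u z x
    + (Complex.I / (2 * k)) * lapl (u z) x

/-- A family of Schwartz functions, indexed by `z`, has locally bounded Schwartz seminorms. -/
def LocBddSeminorms {d : ℕ} (f : ℝ → 𝓢(EuclideanSpace ℝ (Fin d), ℂ)) : Prop :=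
  ∀ (i j : ℕ) (z₀ : ℝ), ∃ δ > (0 : ℝ), ∃ M : ℝ,
    ∀ z : ℝ, |z - z₀| ≤ δ → SchwartzMap.seminorm ℝ i j (f z) ≤ M

/-- The real bilinear form `B(u,v) = Re (conj u * (i v))`. -/
noncomputable def fluxForm : ℂ →L[ℝ] ℂ →L[ℝ] ℝ :=
  (innerSL ℝ : ℂ →L[ℝ] ℂ →L[ℝ] ℝ).bilinearComp (ContinuousLinearMap.id ℝ ℂ)
    (ContinuousLinearMap.mul ℝ ℂ Complex.I)

lemma fluxForm_apply (u v : ℂ) : fluxForm u v = u.im * v.re - u.re * v.im := by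
  simp [fluxForm, Complex.inner]
  ring

lemma lapl_schwartz {d : ℕ} (f : 𝓢(EuclideanSpace ℝ (Fin d), ℂ)) (x : EuclideanSpace ℝ (Fin d)) :
    lapl f x = ∑ i : Fin d, LineDeriv.lineDerivOp (EuclideanSpace.single i (1 : ℝ))
      (LineDeriv.lineDerivOp (EuclideanSpace.single i (1 : ℝ)) f) x := rfl

lemma lapl_comb {d : ℕ} (f g : 𝓢(EuclideanSpace ℝ (Fin d), ℂ)) (e : ℂ)
    (x : EuclideanSpace ℝ (Fin d)) :
    lapl (f + e • g : 𝓢(EuclideanSpace ℝ (Fin d), ℂ)) x = lapl f x + e * lapl g x := by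
  simp only [lapl_schwartz, LineDeriv.lineDerivOp_add, LineDeriv.lineDerivOp_smul,
    add_apply, smul_apply, Finset.sum_add_distrib, Finset.mul_sum,
    smul_eq_mul]

lemma integral_fluxForm_lapl {d : ℕ} (c : 𝓢(EuclideanSpace ℝ (Fin d), ℂ)) :
    ∫ x, fluxForm (c x) (lapl c x) = 0 := by
  simp only [lapl_schwartz, map_sum]
  rw [integral_finsetSum]
  · refine Finset.sum_eq_zero fun i _ => ?_
    rw [SchwartzMap.integral_bilinear_lineDerivOp_right_eq_neg_left]
    simp [fluxForm_apply, mul_comm]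
  · intro i _
    exact (SchwartzMap.pairing fluxForm c _).integrable

lemma LocBddSeminorms.decay {d : ℕ} {f : ℝ → 𝓢(EuclideanSpace ℝ (Fin d), ℂ)}
    (hf : LocBddSeminorms f) (n : ℕ) (z₀ : ℝ) :
    ∃ δ > (0 : ℝ), ∃ C : ℝ, ∀ z : ℝ, |z - z₀| ≤ δ → ∀ x,
      ‖f z x‖ ≤ C * (1 + ‖x‖) ^ (-(n : ℝ)) := by
  obtain ⟨δ₁, h₁, M₁, H₁⟩ := hf 0 0 z₀
  obtain ⟨δ₂, h₂, M₂, H₂⟩ := hf n 0 z₀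
  refine ⟨min δ₁ δ₂, lt_min h₁ h₂, 2 ^ (n - 1) * (M₁ + M₂), fun z hz x => ?_⟩
  have e1 := (norm_le_seminorm ℝ (f z) x).trans (H₁ z (hz.trans (min_le_left _ _)))
  have e2 := (norm_pow_mul_le_seminorm ℝ (f z) n x).trans (H₂ z (hz.trans (min_le_right _ _)))
  have hp : 0 < (1 + ‖x‖) ^ n := by positivity
  rw [Real.rpow_neg (by positivity), Real.rpow_natCast, ← div_eq_mul_inv, le_div_iff₀ hp]
  have h3 := add_pow_le (zero_le_one) (norm_nonneg x) n
  calc ‖f z x‖ * (1 + ‖x‖) ^ n ≤ ‖f z x‖ * (2 ^ (n - 1) * (1 ^ n + ‖x‖ ^ n)) := by gcongr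
    _ = 2 ^ (n - 1) * (‖f z x‖ + ‖x‖ ^ n * ‖f z x‖) := by rw [one_pow]; ring
    _ ≤ _ := by gcongr

lemma integrable_normSq {d : ℕ} (f : 𝓢(EuclideanSpace ℝ (Fin d), ℂ)) :
    Integrable fun x => ‖f x‖ ^ 2 := by
  have := (SchwartzMap.pairing (innerSL ℝ : ℂ →L[ℝ] ℂ →L[ℝ] ℝ) f f).integrable (μ := volume)
  refine this.congr (ae_of_all _ fun x => ?_)
  exact real_inner_self_eq_norm_sq (f x)

lemma hasDerivAt_energy {d : ℕ} (f f' : ℝ → 𝓢(EuclideanSpace ℝ (Fin d), ℂ))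
    (hd : ∀ z x, HasDerivAt (fun z' => f z' x) (f' z x) z)
    (hf : LocBddSeminorms f) (hf' : LocBddSeminorms f') (z : ℝ) :
    Integrable (fun x => 2 * inner ℝ (f z x) (f' z x)) ∧
    HasDerivAt (fun z => ∫ x, ‖f z x‖ ^ 2) (∫ x, 2 * inner ℝ (f z x) (f' z x)) z := by
  obtain ⟨δ₁, h₁, M, H₁⟩ := hf 0 0 z
  obtain ⟨δ₂, h₂, C, H₂⟩ := hf'.decay (d + 1) z
  refine hasDerivAt_integral_of_dominated_loc_of_deriv_le
    (F := fun z x => ‖f z x‖ ^ 2)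
    (F' := fun z x => 2 * inner ℝ (f z x) (f' z x))
    (bound := fun x => (2 * M * C) * (1 + ‖x‖) ^ (-((d + 1 : ℕ) : ℝ)))
    (s := Metric.closedBall z (min δ₁ δ₂))
    (Metric.closedBall_mem_nhds _ (lt_min h₁ h₂)) ?_ (integrable_normSq _) ?_ ?_ ?_ ?_
  · exact Filter.Eventually.of_forall fun z => (integrable_normSq _).1
  · have h1 := (f z).continuous
    have h2 := (f' z).continuous
    exact Continuous.aestronglyMeasurable (by fun_prop)
  · refine ae_of_all _ fun x w hw => ?_
    rw [Metric.mem_closedBall, Real.dist_eq] at hw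
    have e1 := (norm_le_seminorm ℝ (f w) x).trans (H₁ w (hw.trans (min_le_left _ _)))
    have e2 := H₂ w (hw.trans (min_le_right _ _)) x
    have hM : 0 ≤ M := (norm_nonneg _).trans e1
    rw [norm_mul, Real.norm_two]
    calc 2 * ‖inner ℝ (f w x) (f' w x)‖ ≤ 2 * (‖f w x‖ * ‖f' w x‖) := by
          gcongr; exact norm_inner_le_norm _ _
      _ ≤ 2 * (M * (C * (1 + ‖x‖) ^ (-((d + 1 : ℕ) : ℝ)))) := by gcongr
      _ = _ := by ring
  · refine (integrable_one_add_norm ?_).const_mul _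
    simp
  · exact ae_of_all _ fun x w _ => (hd w x).norm_sq

/-- conservation of the net energy flux, Step 1 of Proposition 3.1.
If `a, b` are smooth solutions of the coupled paraxial mode equations
`∂_z a = 𝒫a + e^{−2ikz/ε⁴} 𝒫b`, `∂_z b = −e^{2ikz/ε⁴} 𝒫a − 𝒫b`, Schwartz in `x` for each `z`
with locally bounded seminorms (also for their `z`-derivatives `a', b'`), then
`z ↦ ∫ (|a(z,x)|² − |b(z,x)|²) dx` is constant. -/
theorem energy_flux_conservation (d : ℕ) (hd : 1 ≤ d) (k ε : ℝ) (hk : 0 < k) (hε : 0 < ε)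
    (ν : ℝ → EuclideanSpace ℝ (Fin d) → ℝ)
    (hν : Continuous fun q : ℝ × EuclideanSpace ℝ (Fin d) => ν q.1 q.2)
    (a b a' b' : ℝ → 𝓢(EuclideanSpace ℝ (Fin d), ℂ))
    (hderiva : ∀ z x, HasDerivAt (fun z' => a z' x) (a' z x) z)
    (hderivb : ∀ z x, HasDerivAt (fun z' => b z' x) (b' z x) z)
    (hba : LocBddSeminorms a) (hbb : LocBddSeminorms b)
    (hba' : LocBddSeminorms a') (hbb' : LocBddSeminorms b')
    (heqa : ∀ z x,
      a' z x = paraxOp k ε ν (fun z' x' => a z' x') z x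
        + Complex.exp (-2 * Complex.I * k * z / ε ^ 4) *
            paraxOp k ε ν (fun z' x' => b z' x') z x)
    (heqb : ∀ z x,
      b' z x = -Complex.exp (2 * Complex.I * k * z / ε ^ 4) *
            paraxOp k ε ν (fun z' x' => a z' x') z x
        - paraxOp k ε ν (fun z' x' => b z' x') z x) :
    ∀ z₁ z₂ : ℝ,
      (∫ x : EuclideanSpace ℝ (Fin d), (‖a z₁ x‖ ^ 2 - ‖b z₁ x‖ ^ 2)) =
        ∫ x : EuclideanSpace ℝ (Fin d), (‖a z₂ x‖ ^ 2 - ‖b z₂ x‖ ^ 2) := by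
  suffices H : ∀ z, HasDerivAt
      (fun z => ∫ x : EuclideanSpace ℝ (Fin d), (‖a z x‖ ^ 2 - ‖b z x‖ ^ 2)) 0 z from
    fun z₁ z₂ => is_const_of_deriv_eq_zero (fun z => (H z).differentiableAt)
      (fun z => (H z).deriv) z₁ z₂
  intro z
  obtain ⟨ia, ha⟩ := hasDerivAt_energy a a' hderiva hba hba' z
  obtain ⟨ib, hb⟩ := hasDerivAt_energy b b' hderivb hbb hbb' z
  have hsub := ha.fun_sub hb
  simp only [← integral_sub (integrable_normSq _) (integrable_normSq _)] at hsub
  rw [← integral_sub ia ib] at hsub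
  set e : ℂ := Complex.exp (-2 * Complex.I * k * z / ε ^ 4) with he
  set c : 𝓢(EuclideanSpace ℝ (Fin d), ℂ) := a z + e • b z with hc
  have hconj : Complex.exp (2 * Complex.I * k * z / ε ^ 4) = (starRingEnd ℂ) e := by
    rw [he, ← Complex.exp_conj]
    have h2 : (starRingEnd ℂ) 2 = 2 := Complex.conj_ofNat 2
    simp [Complex.conj_ofReal, h2]
  have hnorm : e.re ^ 2 + e.im ^ 2 = 1 := by
    have h1 : (starRingEnd ℂ) e * e = 1 := by
      rw [← hconj, he, ← Complex.exp_add, ← Complex.exp_zero]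
      congr 1
      ring
    have h2 := congrArg Complex.re h1
    simp at h2
    linarith
  have key : ∀ x, 2 * inner ℝ (a z x) (a' z x) - 2 * inner ℝ (b z x) (b' z x)
      = (1 / k) * fluxForm (c x) (lapl c x) := by
    intro x
    have hk' : k ≠ 0 := hk.ne'
    have hP : ∀ u : ℝ → 𝓢(EuclideanSpace ℝ (Fin d), ℂ),
        paraxOp k ε ν (fun z' x' => u z' x') z x =
          Complex.I * (((k / (2 * ε) * ν (z / ε ^ 2) x : ℝ) : ℂ) * u z x
            + ((1 / (2 * k) : ℝ) : ℂ) * lapl (u z) x) := by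
      intro u
      simp only [paraxOp]
      push_cast
      ring
    rw [heqa, heqb, hconj, hP, hP, ← he, hc, lapl_comb, fluxForm_apply]
    have h1k : 1 / k = 2 * (1 / (2 * k)) := by field_simp
    rw [h1k]
    generalize k / (2 * ε) * ν (z / ε ^ 2) x = r
    generalize 1 / (2 * k) = s
    generalize lapl (a z) x = p
    generalize lapl (b z) x = q
    simp only [add_apply, smul_apply, smul_eq_mul]
    generalize a z x = u
    generalize b z x = v
    simp only [Complex.inner, Complex.add_re, Complex.add_im, Complex.mul_re, Complex.mul_im,
      Complex.I_re, Complex.I_im, Complex.ofReal_re, Complex.ofReal_im, Complex.conj_re,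
      Complex.conj_im, Complex.sub_re, Complex.sub_im, Complex.neg_re, Complex.neg_im]
    linear_combination (2 * s * (v.re * q.im - v.im * q.re)) * hnorm
  rw [integral_congr_ae (ae_of_all _ key), integral_const_mul, integral_fluxForm_lapl,
    mul_zero] at hsub
  exact hsub
end

section
/- Let d ≥ 1, β > 0 and r ∈ ℝ^d. Let Ĉ₀ : ℝ^d → ℝ be nonnegative, even and integrable, and define 𝒞₀(x) = (2π)^{−d} ∫_{ℝ^d} Ĉ₀(u) cos(u·x) du for x ∈ ℝ^d. Define W : [0,∞) × ℝ^d → ℝ by W(ζ, u) = exp( β ∫₀^ζ [𝒞₀(u/2 + rζ') + 𝒞₀(u/2 − rζ') − 2𝒞₀(0)] dζ' ). Then for every ζ ≥ 0 and every u ∈ ℝ^d, ∂_ζ W(ζ, u) = (2β/(2π)^d) ( ∫_{ℝ^d} Ĉ₀(v) [ e^{i v·u/2} cos(r·v ζ) − 1 ] dv ) · W(ζ, u), and W(0, u) = 1. -/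
open MeasureTheory Real
open scoped RealInnerProductSpace

/-- The integrated autocorrelation function `𝒞₀(x) = (2π)^{−d} ∫ Chat₀(u) cos(u·x) du`. -/
noncomputable def corr {d : ℕ} (Chat : EuclideanSpace ℝ (Fin d) → ℝ)
    (x : EuclideanSpace ℝ (Fin d)) : ℝ :=
  (2 * π) ^ (-(d : ℝ)) * ∫ u : EuclideanSpace ℝ (Fin d), Chat u * Real.cos ⟪u, x⟫

/-- `W(ζ,u) = exp(β ∫₀^ζ [𝒞₀(u/2 + rζ') + 𝒞₀(u/2 − rζ') − 2𝒞₀(0)] dζ')`, formula (4.10). -/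
noncomputable def Wfun {d : ℕ} (β : ℝ) (r : EuclideanSpace ℝ (Fin d))
    (Chat : EuclideanSpace ℝ (Fin d) → ℝ) (ζ : ℝ) (u : EuclideanSpace ℝ (Fin d)) : ℝ :=
  Real.exp (β * ∫ ζ' in (0 : ℝ)..ζ,
    (corr Chat ((2 : ℝ)⁻¹ • u + ζ' • r) + corr Chat ((2 : ℝ)⁻¹ • u - ζ' • r)
      - 2 * corr Chat (0 : EuclideanSpace ℝ (Fin d))))

lemma corr_int {d : ℕ} {Chat : EuclideanSpace ℝ (Fin d) → ℝ} (hint : Integrable Chat)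
    (x : EuclideanSpace ℝ (Fin d)) :
    Integrable (fun u : EuclideanSpace ℝ (Fin d) => Chat u * Real.cos ⟪u, x⟫) := by
  refine hint.mul_bdd (c := 1) ?_ ?_
  · exact (by fun_prop : Continuous fun u : EuclideanSpace ℝ (Fin d) =>
      Real.cos ⟪u, x⟫).aestronglyMeasurable
  · exact Filter.Eventually.of_forall fun u => by
      simpa using Real.abs_cos_le_one _

lemma corr_cont {d : ℕ} {Chat : EuclideanSpace ℝ (Fin d) → ℝ} (hint : Integrable Chat) :
    Continuous (corr Chat) := by
  unfold corr
  refine continuous_const.mul ?_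
  refine continuous_of_dominated (bound := fun u => |Chat u|) ?_ ?_ hint.abs ?_
  · exact fun x => (corr_int hint x).aestronglyMeasurable
  · intro x
    refine Filter.Eventually.of_forall fun u => ?_
    rw [norm_mul]
    exact mul_le_of_le_one_right (abs_nonneg _) (Real.abs_cos_le_one _)
  · exact Filter.Eventually.of_forall fun u => by fun_prop

lemma key_int {d : ℕ} {Chat : EuclideanSpace ℝ (Fin d) → ℝ} (hint : Integrable Chat)
    (heven : ∀ u, Chat (-u) = Chat u) (u r : EuclideanSpace ℝ (Fin d)) (ζ : ℝ) :
    2 * (∫ v : EuclideanSpace ℝ (Fin d),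
              ((Chat v : ℝ) : ℂ) *
                (Complex.exp (Complex.I * ((⟪v, u⟫ : ℝ) : ℂ) / 2) *
                    ((Real.cos (⟪r, v⟫ * ζ) : ℝ) : ℂ) - 1)) =
      (((∫ v, Chat v * Real.cos ⟪v, (2 : ℝ)⁻¹ • u + ζ • r⟫) +
       (∫ v, Chat v * Real.cos ⟪v, (2 : ℝ)⁻¹ • u - ζ • r⟫) -
       2 * (∫ v, Chat v * Real.cos ⟪v, (0 : EuclideanSpace ℝ (Fin d))⟫) : ℝ) : ℂ) := by
  set f : EuclideanSpace ℝ (Fin d) → ℂ := fun v => ((Chat v : ℝ) : ℂ) *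
                (Complex.exp (Complex.I * ((⟪v, u⟫ : ℝ) : ℂ) / 2) *
                    ((Real.cos (⟪r, v⟫ * ζ) : ℝ) : ℂ) - 1) with hf
  have hfi : Integrable f := by
    refine hint.ofReal.mul_bdd (c := 2) ?_ ?_
    · exact (by fun_prop : Continuous fun v : EuclideanSpace ℝ (Fin d) =>
        (Complex.exp (Complex.I * ((⟪v, u⟫ : ℝ) : ℂ) / 2) *
                    ((Real.cos (⟪r, v⟫ * ζ) : ℝ) : ℂ) - 1)).aestronglyMeasurable
    · refine Filter.Eventually.of_forall fun v => ?_
      have h1 : ‖Complex.exp (Complex.I * ((⟪v, u⟫ : ℝ) : ℂ) / 2)‖ = 1 := by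
        have := Complex.norm_exp_ofReal_mul_I (⟪v, u⟫ / 2)
        rw [← this]; congr 2; push_cast; ring
      refine (norm_sub_le _ _).trans ?_
      rw [norm_mul, h1, Complex.norm_real, norm_one, one_mul]
      have := Real.abs_cos_le_one (⟪r, v⟫ * ζ)
      rw [Real.norm_eq_abs]; linarith
  have h2 : 2 * ∫ v, f v = ∫ v, (f v + f (-v)) := by
    rw [integral_add hfi hfi.comp_neg, integral_neg_eq_self f, two_mul]
  rw [h2, ← integral_const_mul, ← integral_add (corr_int hint _) (corr_int hint _),
    ← integral_sub (by exact (corr_int hint _).add (corr_int hint _)) ((corr_int hint _).const_mul 2),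
    ← integral_complex_ofReal]
  congr 1
  ext v
  have e1 : Complex.exp (Complex.I * ((⟪v, u⟫ : ℝ) : ℂ) / 2)
      + Complex.exp (Complex.I * ((-⟪v, u⟫ : ℝ) : ℂ) / 2)
      = ((2 * Real.cos (2⁻¹ * ⟪v, u⟫) : ℝ) : ℂ) := by
    push_cast
    rw [Complex.cos]
    ring_nf
  simp only [hf, heven, inner_neg_left, inner_neg_right, neg_mul, Real.cos_neg, inner_add_right,
    inner_sub_right, inner_smul_right, inner_zero_right, Real.cos_zero, Real.cos_add, Real.cos_sub]
  rw [real_inner_comm v r] 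
  rw [mul_comm ζ]
  push_cast at e1 ⊢
  linear_combination (Chat v : ℂ) * Complex.cos ((⟪v, r⟫ : ℝ) * ζ) * e1

/-- Lemma 4.1(2) in the Fourier domain.
For `Chat₀` nonnegative, even and integrable, the function `W` satisfies `W(0,u) = 1` and the
scalar linear ODE
`∂_ζ W(ζ,u) = (2β/(2π)^d) (∫ Chat₀(v)[e^{iv·u/2} cos(r·vζ) − 1] dv) W(ζ,u)` for every `ζ ≥ 0`. -/
theorem wigner_reflection_ode (d : ℕ) (hd : 1 ≤ d) (β : ℝ) (hβ : 0 < β)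
    (r : EuclideanSpace ℝ (Fin d))
    (Chat : EuclideanSpace ℝ (Fin d) → ℝ)
    (hpos : ∀ u, 0 ≤ Chat u) (heven : ∀ u, Chat (-u) = Chat u) (hint : Integrable Chat) :
    ∀ u : EuclideanSpace ℝ (Fin d),
      Wfun β r Chat 0 u = 1 ∧
      ∀ ζ : ℝ, 0 ≤ ζ →
        HasDerivAt (fun t => (Wfun β r Chat t u : ℂ))
          (((2 * β / (2 * π) ^ d : ℝ) : ℂ) *
            (∫ v : EuclideanSpace ℝ (Fin d),
              ((Chat v : ℝ) : ℂ) *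
                (Complex.exp (Complex.I * ((⟪v, u⟫ : ℝ) : ℂ) / 2) *
                    ((Real.cos (⟪r, v⟫ * ζ) : ℝ) : ℂ) - 1)) *
            ((Wfun β r Chat ζ u : ℝ) : ℂ)) ζ := by
  intro u
  refine ⟨by simp [Wfun], fun ζ _ => ?_⟩
  have hc := corr_cont hint
  have hcont : Continuous fun t : ℝ => corr Chat ((2 : ℝ)⁻¹ • u + t • r)
      + corr Chat ((2 : ℝ)⁻¹ • u - t • r) - 2 * corr Chat (0 : EuclideanSpace ℝ (Fin d)) := by
    fun_prop
  have h := (((hcont.integral_hasStrictDerivAt 0 ζ).hasDerivAt.const_mul β).exp).ofReal_comp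
  refine h.congr_deriv ?_
  have hk := key_int hint heven u r ζ
  have hp : (2 * π) ^ (-(d : ℝ)) = ((2 * π) ^ d)⁻¹ := by
    rw [Real.rpow_neg (by positivity), Real.rpow_natCast]
  have hW : ∀ x : ℂ, ((2 * β / (2 * π) ^ d : ℝ) : ℂ) * x
      = ((β * ((2 * π) ^ d)⁻¹ : ℝ) : ℂ) * (2 * x) := by
    intro x; push_cast; ring
  rw [hW, hk, ← Complex.ofReal_mul, ← Complex.ofReal_mul]
  congr 1
  simp only [Wfun, corr, hp]
  ring
end

section
/- Let d ≥ 1 and let r₀, k₀, L, D > 0 and x, y ∈ ℝ^d. Define r_T = r₀ √(1 + D L³/(3 r₀²)), define χ_T > 0 by χ_T² = 2 r_T²/(k₀ D L²), and define ρ_T > 0 by ρ_T² = r_T² / (1 + D L³/(3 r₀²) + k₀² D r₀² L/4 + k₀² D² L⁴/48). Then the Gaussian integral (r₀²/(8π))^{d/2} ∫_{ℝ^d} exp( − r₀² |η|²/8 − |y|²/(2 r₀²) − i η·x − (k₀² D/8)·( L³ |η|²/(3 k₀²) + L² (η·y)/k₀ + L |y|² ) ) dη equals (r₀/r_T)^d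 · exp( − 2|x|²/r_T² − |y|²/(2 ρ_T²) + i (x·y)/χ_T² ). -/
open MeasureTheory Real
open scoped RealInnerProductSpace

/-- Gaussian integral with a general complex linear term. -/
theorem gaussian_aux {d : ℕ} (b a K : ℝ) (hb : 0 < b) (x y : EuclideanSpace ℝ (Fin d)) :
    ∫ η : EuclideanSpace ℝ (Fin d),
      Complex.exp (-(b : ℂ) * ((‖η‖ ^ 2 : ℝ) : ℂ) - Complex.I * ((⟪η, x⟫ : ℝ) : ℂ)
        - a * ((⟪η, y⟫ : ℝ) : ℂ) + K)
    = (((π / b) ^ ((d : ℝ) / 2) : ℝ) : ℂ) *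
      Complex.exp ((-((‖x‖ ^ 2 : ℝ) : ℂ) + 2 * Complex.I * a * ((⟪x, y⟫ : ℝ) : ℂ)
        + a ^ 2 * ((‖y‖ ^ 2 : ℝ) : ℂ)) / (4 * b) + K) := by
  have key := GaussianFourier.integral_cexp_neg_mul_sum_add (ι := Fin d) (b := (b : ℂ))
    (by simpa using hb) (fun i => -Complex.I * (x i : ℂ) - a * (y i : ℂ))
  simp_rw [Complex.exp_add _ (K : ℂ)]
  rw [integral_mul_const, ← mul_assoc]
  congr 1
  rw [← (PiLp.volume_preserving_toLp (Fin d)).integral_comp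
    (MeasurableEquiv.toLp 2 _).measurableEmbedding]
  have hpow : (((π / b) ^ ((d : ℝ) / 2) : ℝ) : ℂ)
      = ((π : ℂ) / b) ^ ((Fintype.card (Fin d) : ℂ) / 2) := by
    rw [Complex.ofReal_cpow (by positivity)]
    simp
  have hsum : (∑ i, (-Complex.I * (x i : ℂ) - a * (y i : ℂ)) ^ 2)
      = -((‖x‖ ^ 2 : ℝ) : ℂ) + 2 * Complex.I * a * ((⟪x, y⟫ : ℝ) : ℂ)
        + a ^ 2 * ((‖y‖ ^ 2 : ℝ) : ℂ) := by
    rw [EuclideanSpace.real_norm_sq_eq, EuclideanSpace.real_norm_sq_eq, PiLp.inner_apply]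
    push_cast
    rw [Finset.mul_sum, Finset.mul_sum, ← Finset.sum_neg_distrib, ← Finset.sum_add_distrib,
      ← Finset.sum_add_distrib]
    refine Finset.sum_congr rfl fun i _ => ?_
    simp only [RCLike.inner_apply, conj_trivial]
    push_cast
    linear_combination (x i : ℂ) ^ 2 * Complex.I_sq
  rw [hpow, ← hsum, ← key]
  refine integral_congr_ae (Filter.Eventually.of_forall fun v => ?_)
  simp only
  congr 1
  rw [EuclideanSpace.real_norm_sq_eq, PiLp.inner_apply, PiLp.inner_apply]
  simp only [RCLike.inner_apply, conj_trivial]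
  push_cast
  rw [sub_sub, sub_eq_add_neg, Finset.mul_sum, Finset.mul_sum (a := Complex.I),
    Finset.mul_sum (a := (a : ℂ)), ← Finset.sum_add_distrib,
    ← Finset.sum_neg_distrib]
  congr 1
  refine Finset.sum_congr rfl fun i _ => ?_
  ring

/-- Gaussian evaluation of the transmitted-field autocorrelation (5.5).
With `r_T = r₀√(1 + DL³/(3r₀²))`, `χ_T² = 2r_T²/(k₀DL²)` and
`ρ_T² = r_T²/(1 + DL³/(3r₀²) + k₀²Dr₀²L/4 + k₀²D²L⁴/48)`, the Gaussian integral
`(r₀²/(8π))^{d/2} ∫ exp(−r₀²|η|²/8 − |y|²/(2r₀²) − iη·x − (k₀²D/8)(L³|η|²/(3k₀²) + L²η·y/k₀ + L|y|²)) dη`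
equals `(r₀/r_T)^d exp(−2|x|²/r_T² − |y|²/(2ρ_T²) + i x·y/χ_T²)`. -/
theorem transmitted_autocorrelation_gaussian (d : ℕ) (hd : 1 ≤ d)
    (r₀ k₀ L D : ℝ) (hr₀ : 0 < r₀) (hk₀ : 0 < k₀) (hL : 0 < L) (hD : 0 < D)
    (x y : EuclideanSpace ℝ (Fin d))
    (rT χT ρT : ℝ) (hrT : rT = r₀ * Real.sqrt (1 + D * L ^ 3 / (3 * r₀ ^ 2)))
    (hχT : 0 < χT ∧ χT ^ 2 = 2 * rT ^ 2 / (k₀ * D * L ^ 2))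
    (hρT : 0 < ρT ∧ ρT ^ 2 = rT ^ 2 /
      (1 + D * L ^ 3 / (3 * r₀ ^ 2) + k₀ ^ 2 * D * r₀ ^ 2 * L / 4
        + k₀ ^ 2 * D ^ 2 * L ^ 4 / 48)) :
    (((r₀ ^ 2 / (8 * π)) ^ ((d : ℝ) / 2) : ℝ) : ℂ) *
      (∫ η : EuclideanSpace ℝ (Fin d),
        Complex.exp
          (-((r₀ ^ 2 * ‖η‖ ^ 2 / 8 : ℝ) : ℂ) - ((‖y‖ ^ 2 / (2 * r₀ ^ 2) : ℝ) : ℂ)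
            - Complex.I * ((⟪η, x⟫ : ℝ) : ℂ)
            - (((k₀ ^ 2 * D / 8) *
                (L ^ 3 * ‖η‖ ^ 2 / (3 * k₀ ^ 2) + L ^ 2 * ⟪η, y⟫ / k₀ + L * ‖y‖ ^ 2) : ℝ) : ℂ)))
      = (((r₀ / rT) ^ d : ℝ) : ℂ) *
        Complex.exp
          (-((2 * ‖x‖ ^ 2 / rT ^ 2 : ℝ) : ℂ) - ((‖y‖ ^ 2 / (2 * ρT ^ 2) : ℝ) : ℂ)
            + Complex.I * ((⟪x, y⟫ / χT ^ 2 : ℝ) : ℂ)) := by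
  obtain ⟨_, hχ⟩ := hχT
  obtain ⟨_, hρ⟩ := hρT
  have hrTpos : 0 < rT := by rw [hrT]; positivity
  have hrT2 : rT ^ 2 = r₀ ^ 2 + D * L ^ 3 / 3 := by
    rw [hrT, mul_pow, Real.sq_sqrt (by positivity)]
    field_simp
  have aux := gaussian_aux (rT ^ 2 / 8) (k₀ * D * L ^ 2 / 8)
    (-(‖y‖ ^ 2 / (2 * r₀ ^ 2)) - k₀ ^ 2 * D / 8 * (L * ‖y‖ ^ 2)) (by positivity) x y
  have hint : ∀ η : EuclideanSpace ℝ (Fin d),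
      (-((r₀ ^ 2 * ‖η‖ ^ 2 / 8 : ℝ) : ℂ) - ((‖y‖ ^ 2 / (2 * r₀ ^ 2) : ℝ) : ℂ)
            - Complex.I * ((⟪η, x⟫ : ℝ) : ℂ)
            - (((k₀ ^ 2 * D / 8) *
                (L ^ 3 * ‖η‖ ^ 2 / (3 * k₀ ^ 2) + L ^ 2 * ⟪η, y⟫ / k₀ + L * ‖y‖ ^ 2) : ℝ) : ℂ))
      = -((rT ^ 2 / 8 : ℝ) : ℂ) * ((‖η‖ ^ 2 : ℝ) : ℂ) - Complex.I * ((⟪η, x⟫ : ℝ) : ℂ)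
        - ((k₀ * D * L ^ 2 / 8 : ℝ) : ℂ) * ((⟪η, y⟫ : ℝ) : ℂ)
        + ((-(‖y‖ ^ 2 / (2 * r₀ ^ 2)) - k₀ ^ 2 * D / 8 * (L * ‖y‖ ^ 2) : ℝ) : ℂ) := by
    intro η
    have h : -(r₀ ^ 2 * ‖η‖ ^ 2 / 8) - ‖y‖ ^ 2 / (2 * r₀ ^ 2) - (k₀ ^ 2 * D / 8) *
                (L ^ 3 * ‖η‖ ^ 2 / (3 * k₀ ^ 2) + L ^ 2 * ⟪η, y⟫ / k₀ + L * ‖y‖ ^ 2)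
        = -(rT ^ 2 / 8) * ‖η‖ ^ 2 - (k₀ * D * L ^ 2 / 8) * ⟪η, y⟫
          + (-(‖y‖ ^ 2 / (2 * r₀ ^ 2)) - k₀ ^ 2 * D / 8 * (L * ‖y‖ ^ 2)) := by
      rw [hrT2]
      field_simp
      ring
    have h' := congrArg (fun t : ℝ => (t : ℂ)) h
    simp only [Complex.ofReal_sub, Complex.ofReal_add, Complex.ofReal_neg,
      Complex.ofReal_mul (-(rT ^ 2 / 8)), Complex.ofReal_mul (k₀ * D * L ^ 2 / 8)] at h' ⊢
    linear_combination h'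
  simp_rw [hint]
  rw [aux, ← mul_assoc, ← Complex.ofReal_mul]
  congr 2
  · rw [← Real.mul_rpow (by positivity) (by positivity)]
    have : r₀ ^ 2 / (8 * π) * (π / (rT ^ 2 / 8)) = (r₀ / rT) ^ 2 := by
      have := Real.pi_pos
      field_simp
    rw [this, ← Real.rpow_natCast (r₀ / rT) 2, ← Real.rpow_mul (by positivity),
      ← Real.rpow_natCast]
    congr 1
    push_cast
    ring
  · have hy : (k₀ * D * L ^ 2 / 8) ^ 2 * ‖y‖ ^ 2 / (4 * (rT ^ 2 / 8))
        + (-(‖y‖ ^ 2 / (2 * r₀ ^ 2)) - k₀ ^ 2 * D / 8 * (L * ‖y‖ ^ 2))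
        = -(‖y‖ ^ 2 / (2 * ρT ^ 2)) := by
      rw [hρ, hrT2]
      field_simp
      ring
    have hxy : ⟪x, y⟫ / χT ^ 2 = 2 * (k₀ * D * L ^ 2 / 8) * ⟪x, y⟫ / (4 * (rT ^ 2 / 8)) := by
      rw [hχ]
      field_simp
      ring
    have hx : 2 * ‖x‖ ^ 2 / rT ^ 2 = ‖x‖ ^ 2 / (4 * (rT ^ 2 / 8)) := by
      field_simp
      ring
    have hy' := congrArg (fun t : ℝ => (t : ℂ)) hy
    rw [hxy, hx]
    push_cast at hy' ⊢
    linear_combination hy'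
end

section
/- Let d ≥ 1, β > 0, 𝒟 > 0, c₀ ∈ ℝ, and let 𝒞₀(x) = c₀ − (𝒟/2)|x|². For r, q ∈ ℝ^d and ζ > 0 set 𝒱_r(ζ, q) = (2π)^{−d} ∫_{ℝ^d} e^{−i q·u} exp( β ∫₀^ζ [𝒞₀(u/2 + rζ') + 𝒞₀(u/2 − rζ') − 2𝒞₀(0)] dζ' ) du. Then for every q ∈ ℝ^d and every r ∈ ℝ^d: 𝒱_0(1, q) + 𝒱_r(1, q) = (1 + e^{−β𝒟|r|²/3}) · 𝒱_0(1, q). In particular, the value at r = 0 equals 2 𝒱_0(1, q), twice the limiting value as |r| → ∞, and the profile in r is a Gaussian cone of width √3/√(β𝒟). -/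
open MeasureTheory Real Filter
open scoped RealInnerProductSpace Topology

/-- The quadratic autocorrelation function `𝒞₀(x) = c₀ − (𝒟/2)|x|²`. -/
noncomputable def quadCorr {d : ℕ} (c₀ D : ℝ) (x : EuclideanSpace ℝ (Fin d)) : ℝ :=
  c₀ - D / 2 * ‖x‖ ^ 2

/-- Formula (4.10): `𝒱_r(ζ,q) = (2π)^{−d} ∫ e^{−iq·u}
exp(β ∫₀^ζ [𝒞₀(u/2 + rζ') + 𝒞₀(u/2 − rζ') − 2𝒞₀(0)] dζ') du`. -/
noncomputable def Vrefl {d : ℕ} (β c₀ D : ℝ) (r : EuclideanSpace ℝ (Fin d)) (ζ : ℝ)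
    (q : EuclideanSpace ℝ (Fin d)) : ℂ :=
  (((2 * π) ^ (-(d : ℝ)) : ℝ) : ℂ) *
    ∫ u : EuclideanSpace ℝ (Fin d),
      Complex.exp
        (-(Complex.I * ((⟪q, u⟫ : ℝ) : ℂ))
          + ((β * ∫ ζ' in (0 : ℝ)..ζ,
              (quadCorr c₀ D ((2 : ℝ)⁻¹ • u + ζ' • r)
                + quadCorr c₀ D ((2 : ℝ)⁻¹ • u - ζ' • r)
                - 2 * quadCorr c₀ D (0 : EuclideanSpace ℝ (Fin d))) : ℝ) : ℂ))

lemma inner_integral_eq {d : ℕ} (c₀ D : ℝ) (u r : EuclideanSpace ℝ (Fin d)) :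
    (∫ ζ' in (0 : ℝ)..1,
      (quadCorr c₀ D ((2 : ℝ)⁻¹ • u + ζ' • r)
        + quadCorr c₀ D ((2 : ℝ)⁻¹ • u - ζ' • r)
        - 2 * quadCorr c₀ D (0 : EuclideanSpace ℝ (Fin d))))
      = -D * ‖u‖ ^ 2 / 4 - D * ‖r‖ ^ 2 / 3 := by
  have h : ∀ z : ℝ, (quadCorr c₀ D ((2 : ℝ)⁻¹ • u + z • r)
        + quadCorr c₀ D ((2 : ℝ)⁻¹ • u - z • r)
        - 2 * quadCorr c₀ D (0 : EuclideanSpace ℝ (Fin d)))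
      = -D * ‖u‖ ^ 2 / 4 + (-D * ‖r‖ ^ 2) * z ^ 2 := by
    intro z
    have hp := parallelogram_law_with_norm ℝ ((2 : ℝ)⁻¹ • u) (z • r)
    have h1 : ‖(2 : ℝ)⁻¹ • u‖ ^ 2 = ‖u‖ ^ 2 / 4 := by
      rw [norm_smul, Real.norm_eq_abs, abs_of_pos (by norm_num)]; ring
    have h2 : ‖z • r‖ ^ 2 = z ^ 2 * ‖r‖ ^ 2 := by
      rw [norm_smul, Real.norm_eq_abs, ← sq_abs z]; ring
    rw [h1, h2] at hp
    simp only [quadCorr, norm_zero]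
    linear_combination (-D / 2) * hp
  simp_rw [h]
  rw [intervalIntegral.integral_add (by simp) (Continuous.intervalIntegrable (by fun_prop) _ _),
    intervalIntegral.integral_const_mul, integral_pow]
  simp
  ring

lemma Vrefl_one {d : ℕ} (β c₀ D : ℝ) (r q : EuclideanSpace ℝ (Fin d)) :
    Vrefl β c₀ D r 1 q = ((Real.exp (-β * D * ‖r‖ ^ 2 / 3) : ℝ) : ℂ) *
      Vrefl β c₀ D (0 : EuclideanSpace ℝ (Fin d)) 1 q := by
  unfold Vrefl
  simp_rw [inner_integral_eq]
  rw [mul_left_comm, ← integral_const_mul ((Real.exp (-β * D * ‖r‖ ^ 2 / 3) : ℝ) : ℂ)]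
  congr 1
  refine integral_congr_ae (Eventually.of_forall fun u => ?_)
  beta_reduce
  rw [Complex.ofReal_exp, ← Complex.exp_add]
  congr 1
  push_cast
  simp only [norm_zero]
  push_cast
  ring

/-- enhanced backscattering cone, Section 5.3 and (5.13).
With quadratic medium autocorrelation `𝒞₀(x) = c₀ − (𝒟/2)|x|²`, for every `q` and `r`,
`𝒱_0(1,q) + 𝒱_r(1,q) = (1 + e^{−β𝒟|r|²/3}) 𝒱_0(1,q)`: the profile in `r` is a Gaussian
cone of width `√3/√(β𝒟)`; in particular at `r = 0` the value is `2𝒱_0(1,q)`, twice the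
limiting value as `|r| → ∞` (enhancement factor exactly `2`). -/
theorem enhanced_backscattering_cone (d : ℕ) (hd : 1 ≤ d) (β D c₀ : ℝ)
    (hβ : 0 < β) (hD : 0 < D) :
    (∀ (q r : EuclideanSpace ℝ (Fin d)),
      Vrefl β c₀ D (0 : EuclideanSpace ℝ (Fin d)) 1 q + Vrefl β c₀ D r 1 q =
        ((1 + Real.exp (-β * D * ‖r‖ ^ 2 / 3) : ℝ) : ℂ) *
          Vrefl β c₀ D (0 : EuclideanSpace ℝ (Fin d)) 1 q) ∧
    (∀ q : EuclideanSpace ℝ (Fin d),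
      Vrefl β c₀ D (0 : EuclideanSpace ℝ (Fin d)) 1 q
          + Vrefl β c₀ D (0 : EuclideanSpace ℝ (Fin d)) 1 q =
        2 * Vrefl β c₀ D (0 : EuclideanSpace ℝ (Fin d)) 1 q) ∧
    (∀ q : EuclideanSpace ℝ (Fin d),
      Tendsto (fun r : EuclideanSpace ℝ (Fin d) =>
          Vrefl β c₀ D (0 : EuclideanSpace ℝ (Fin d)) 1 q + Vrefl β c₀ D r 1 q)
        (Bornology.cobounded (EuclideanSpace ℝ (Fin d)))
        (𝓝 (Vrefl β c₀ D (0 : EuclideanSpace ℝ (Fin d)) 1 q))) := by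
  have key : ∀ (q r : EuclideanSpace ℝ (Fin d)),
      Vrefl β c₀ D (0 : EuclideanSpace ℝ (Fin d)) 1 q + Vrefl β c₀ D r 1 q =
        ((1 + Real.exp (-β * D * ‖r‖ ^ 2 / 3) : ℝ) : ℂ) *
          Vrefl β c₀ D (0 : EuclideanSpace ℝ (Fin d)) 1 q := by
    intro q r
    rw [Vrefl_one β c₀ D r q]
    push_cast
    ring
  refine ⟨key, fun q => by ring, fun q => ?_⟩
  simp_rw [key q]
  have hn : Tendsto (fun r : EuclideanSpace ℝ (Fin d) => β * D / 3 * ‖r‖ ^ 2)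
      (Bornology.cobounded (EuclideanSpace ℝ (Fin d))) atTop :=
    Tendsto.const_mul_atTop (by positivity)
      ((tendsto_pow_atTop two_ne_zero).comp tendsto_norm_cobounded_atTop)
  have he : Tendsto (fun r : EuclideanSpace ℝ (Fin d) =>
      1 + Real.exp (-β * D * ‖r‖ ^ 2 / 3))
      (Bornology.cobounded (EuclideanSpace ℝ (Fin d))) (𝓝 1) := by
    have h := (Real.tendsto_exp_neg_atTop_nhds_zero.comp hn).const_add 1
    rw [add_zero] at h
    refine h.congr fun r => ?_
    simp only [Function.comp]
    congr 2
    ring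
  have hc := ((Complex.continuous_ofReal.tendsto 1).comp he).mul_const
    (Vrefl β c₀ D (0 : EuclideanSpace ℝ (Fin d)) 1 q)
  simpa [Function.comp_def] using hc
end
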